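/- Neither the ℝ³-valued process (X(t), K'(t), D(t) − t)_{t≥0} nor the ℝ³-valued process (B(t), K'(t), D(t) − t)_{t≥0} is Markov, where X = 2K − B. -/

import Mathlib

open MeasureTheory ProbabilityTheory Set Filter Topology
open scoped Classical

noncomputable section

/-- The σ-algebra generated by a process `Y` up to time `t` (over times in `[0, t]`),
i.e. `σ(Y u : 0 ≤ u ≤ t)`. -/
def natSigma {Ω E : Type*} [MeasurableSpace E] (Y : ℝ → Ω → E) (t : ℝ) :
    MeasurableSpace Ω :=
  ⨆ u : Set.Icc (0 : ℝ) t, MeasurableSpace.comap (Y u) inferInstance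

/-- The σ-algebra generated by the whole (nonnegative-time) process `Y`. -/
def procSigma {Ω E : Type*} [MeasurableSpace E] (Y : ℝ → Ω → E) :
    MeasurableSpace Ω :=
  ⨆ u : Set.Ici (0 : ℝ), MeasurableSpace.comap (Y u) inferInstance

/-- `B` is a standard one-dimensional Brownian motion (with `B 0 = 0`) under `P`:
measurable, a.s. starting at `0` and continuous on `[0, ∞)`, with Gaussian increments
`B t - B s ~ N(0, t - s)` that are independent of the past. -/
structure IsBrownianMotion {Ω : Type*} [MeasurableSpace Ω] (P : Measure Ω)
    (B : ℝ → Ω → ℝ) : Prop where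
  measurable : ∀ t : ℝ, Measurable (B t)
  init : ∀ᵐ ω ∂P, B 0 ω = 0
  cont : ∀ᵐ ω ∂P, ContinuousOn (fun t => B t ω) (Set.Ici 0)
  incr_law : ∀ s t : ℝ, 0 ≤ s → s ≤ t →
    P.map (fun ω => B t ω - B s ω) = gaussianReal 0 (Real.toNNReal (t - s))
  incr_indep : ∀ s t : ℝ, 0 ≤ s → s ≤ t →
    Indep (MeasurableSpace.comap (fun ω => B t ω - B s ω) inferInstance)
      (natSigma B s) P

/-- `W` is a standard `n`-dimensional Brownian motion started at the origin:
its coordinate processes are independent standard one-dimensional Brownian motions. -/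
def IsBrownianMotionND {Ω : Type*} [MeasurableSpace Ω] (P : Measure Ω) {n : ℕ}
    (W : ℝ → Ω → EuclideanSpace ℝ (Fin n)) : Prop :=
  (∀ i : Fin n, IsBrownianMotion P (fun t ω => W t ω i)) ∧
  iIndep (fun i : Fin n => procSigma (fun t ω => W t ω i)) P

/-- The least concave majorant on `[0, ∞)` of a function `f : ℝ → ℝ`:
`t ↦ inf { c t | c concave on [0,∞) and c ≥ f on [0,∞) }`. -/
def concaveMajorant (f : ℝ → ℝ) (t : ℝ) : ℝ :=
  sInf {y | ∃ c : ℝ → ℝ, ConcaveOn ℝ (Set.Ici 0) c ∧ (∀ u, 0 ≤ u → f u ≤ c u) ∧ y = c t}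

/-- Right-hand derivative. -/
def rightDeriv (f : ℝ → ℝ) (t : ℝ) : ℝ := derivWithin f (Set.Ioi t) t

/-- `D(t)`: the first vertex (contact point of the concave majorant) at or after time `t`. -/
def firstVertex (f : ℝ → ℝ) (t : ℝ) : ℝ :=
  sInf {u | t ≤ u ∧ concaveMajorant f u = f u}

/-- The concave majorant process `K` of `B`. -/
def Kproc {Ω : Type*} (B : ℝ → Ω → ℝ) (t : ℝ) (ω : Ω) : ℝ :=
  concaveMajorant (fun u => B u ω) t

/-- The process `X = 2K - B`. -/
def Xproc {Ω : Type*} (B : ℝ → Ω → ℝ) (t : ℝ) (ω : Ω) : ℝ :=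
  2 * Kproc B t ω - B t ω

/-- The right-hand slope process `K'` of the concave majorant. -/
def Kslope {Ω : Type*} (B : ℝ → Ω → ℝ) (t : ℝ) (ω : Ω) : ℝ :=
  rightDeriv (fun u => Kproc B u ω) t

/-- The process `D` of first vertices: `D(t) = inf {u ≥ t : K u = B u}`. -/
def Dproc {Ω : Type*} (B : ℝ → Ω → ℝ) (t : ℝ) (ω : Ω) : ℝ :=
  firstVertex (fun u => B u ω) t

/-- A process `Y` is Markov (w.r.t. its natural filtration): for all `0 ≤ s ≤ t`,
`σ(Y t)` is conditionally independent of `σ(Y u : 0 ≤ u ≤ s)` given `σ(Y s)`. -/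
def IsMarkov {Ω E : Type*} [mΩ : MeasurableSpace Ω] [StandardBorelSpace Ω]
    [MeasurableSpace E] (P : Measure Ω) [IsFiniteMeasure P] (Y : ℝ → Ω → E) : Prop :=
  ∀ s t : ℝ, 0 ≤ s → s ≤ t →
    ∃ hs : MeasurableSpace.comap (Y s) inferInstance ≤ mΩ,
      CondIndep (MeasurableSpace.comap (Y s) inferInstance)
        (MeasurableSpace.comap (Y t) inferInstance)
        (natSigma Y s) hs P

/-! ### Deterministic part -/

def HasMaj (f : ℝ → ℝ) : Prop :=
  ∃ c : ℝ → ℝ, ConcaveOn ℝ (Set.Ici 0) c ∧ ∀ u, 0 ≤ u → f u ≤ c u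

lemma cm_le {f c : ℝ → ℝ} (hc : ConcaveOn ℝ (Set.Ici 0) c) (h : ∀ u, 0 ≤ u → f u ≤ c u)
    {t : ℝ} (ht : 0 ≤ t) : concaveMajorant f t ≤ c t := by
  apply csInf_le
  · refine ⟨f t, ?_⟩
    rintro y ⟨c, -, h2, rfl⟩
    exact h2 t ht
  · exact ⟨c, hc, h, rfl⟩

lemma line_concave (m k : ℝ) : ConcaveOn ℝ (Set.Ici (0:ℝ)) (fun u => m + k * u) := by
  refine ⟨convex_Ici 0, ?_⟩
  intro x _ y _ a b _ _ hab
  simp only [smul_eq_mul]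
  have : b = 1 - a := by linarith
  subst this
  apply le_of_eq; ring

lemma cm_le_line {f : ℝ → ℝ} {m k : ℝ} (h : ∀ u, 0 ≤ u → f u ≤ m + k * u)
    {t : ℝ} (ht : 0 ≤ t) : concaveMajorant f t ≤ m + k * t :=
  cm_le (line_concave m k) h ht

lemma le_cm_of {f : ℝ → ℝ} (hf : HasMaj f) {t y : ℝ}
    (h : ∀ c : ℝ → ℝ, ConcaveOn ℝ (Set.Ici 0) c → (∀ u, 0 ≤ u → f u ≤ c u) → y ≤ c t) :
    y ≤ concaveMajorant f t := by
  obtain ⟨c, h1, h2⟩ := hf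
  apply le_csInf
  · exact ⟨c t, c, h1, h2, rfl⟩
  · rintro y ⟨c, h1, h2, rfl⟩
    exact h c h1 h2

lemma le_cm {f : ℝ → ℝ} (hf : HasMaj f) {t : ℝ} (ht : 0 ≤ t) : f t ≤ concaveMajorant f t :=
  le_cm_of hf fun _ _ h => h t ht

lemma cm_concave {f : ℝ → ℝ} (hf : HasMaj f) :
    ConcaveOn ℝ (Set.Ici 0) (concaveMajorant f) := by
  refine ⟨convex_Ici 0, ?_⟩
  intro x hx y hy a b ha hb hab
  apply le_cm_of hf
  intro c h1 h2
  refine le_trans ?_ (h1.2 hx hy ha hb hab)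
  have e1 := cm_le h1 h2 hx
  have e2 := cm_le h1 h2 hy
  simp only [smul_eq_mul]
  nlinarith [mul_le_mul_of_nonneg_left e1 ha, mul_le_mul_of_nonneg_left e2 hb]

lemma cm_congr {f g : ℝ → ℝ} (h : ∀ u, 0 ≤ u → f u = g u) :
    concaveMajorant f = concaveMajorant g := by
  funext t
  unfold concaveMajorant
  congr 1
  ext y
  constructor
  · rintro ⟨c, h1, h2, h3⟩
    exact ⟨c, h1, fun u hu => by rw [← h u hu]; exact h2 u hu, h3⟩
  · rintro ⟨c, h1, h2, h3⟩
    exact ⟨c, h1, fun u hu => by rw [h u hu]; exact h2 u hu, h3⟩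

lemma fv_congr {f g : ℝ → ℝ} (h : ∀ u, 0 ≤ u → f u = g u) {t : ℝ} (ht : 0 ≤ t) :
    firstVertex f t = firstVertex g t := by
  unfold firstVertex
  rw [cm_congr h]
  congr 1
  ext u
  constructor
  · rintro ⟨h1, h2⟩
    exact ⟨h1, by rw [h2, h u (ht.trans h1)]⟩
  · rintro ⟨h1, h2⟩
    exact ⟨h1, by rw [h2, h u (ht.trans h1)]⟩

lemma supergradient {c : ℝ → ℝ} (hc : ConcaveOn ℝ (Set.Ici 0) c) {s : ℝ} (hs : 0 < s)
    {u : ℝ} (hu : 0 ≤ u) : c u ≤ c s + rightDeriv c s * (u - s) := by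
  have hmemInt : s ∈ interior (Set.Ici (0:ℝ)) := by simpa using hs
  unfold rightDeriv
  rcases lt_trichotomy u s with h | h | h
  · have h1 := hc.neg.slope_le_leftDeriv_of_mem_interior hu hmemInt h
    have h2 := hc.neg.leftDeriv_le_rightDeriv_of_mem_interior hmemInt
    have h3 : derivWithin (-c) (Set.Ioi s) s = - derivWithin c (Set.Ioi s) s := derivWithin.neg ..
    rw [h3] at h2
    have h4 := h1.trans h2
    rw [slope_def_field, div_le_iff₀ (by linarith)] at h4
    simp only [Pi.neg_apply] at h4
    linarith
  · subst h; simp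
  · have h1 := hc.neg.rightDeriv_le_slope_of_mem_interior hmemInt hu h
    have h3 : derivWithin (-c) (Set.Ioi s) s = - derivWithin c (Set.Ioi s) s := derivWithin.neg ..
    rw [h3, slope_def_field, le_div_iff₀ (by linarith)] at h1
    simp only [Pi.neg_apply] at h1
    linarith

lemma cm_supergradient {f : ℝ → ℝ} (hf : HasMaj f) {s : ℝ} (hs : 0 < s)
    {u : ℝ} (hu : 0 ≤ u) : concaveMajorant f u ≤
      concaveMajorant f s + rightDeriv (concaveMajorant f) s * (u - s) :=
  supergradient (cm_concave hf) hs hu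

/-- existence of a contact point to the left -/
lemma left_contact {f : ℝ → ℝ} (hcont : ContinuousOn f (Set.Ici 0)) (hf : HasMaj f)
    {s : ℝ} (hs : 0 < s) {k : ℝ}
    (hk : ∀ u, 0 ≤ u → concaveMajorant f u ≤ concaveMajorant f s + k * (u - s)) :
    ∃ g, 0 ≤ g ∧ g ≤ s ∧ f g = concaveMajorant f s + k * (g - s) := by
  set Ks := concaveMajorant f s with hKs
  have hle : ∀ u, 0 ≤ u → f u ≤ Ks + k * (u - s) := fun u hu => (le_cm hf hu).trans (hk u hu)
  have hc2 : ContinuousOn (fun u => f u - k * (u - s)) (Set.Icc 0 s) :=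
    (hcont.mono (fun x hx => hx.1)).sub (by fun_prop)
  obtain ⟨g, hg, hmax⟩ := isCompact_Icc.exists_isMaxOn (Set.nonempty_Icc.2 hs.le) hc2
  refine ⟨g, hg.1, hg.2, ?_⟩
  by_contra hne
  have hlt : f g < Ks + k * (g - s) := lt_of_le_of_ne (hle g hg.1) hne
  -- gap
  set e := Ks + k * (g - s) - f g with he
  have hepos : 0 < e := by linarith
  have hleft : ∀ u, 0 ≤ u → u ≤ s → f u ≤ Ks + k * (u - s) - e := by
    intro u h1 h2
    have := hmax ⟨h1, h2⟩
    simp only [Set.mem_ofPred_eq] at this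
    linarith
  have hcs : ContinuousWithinAt (fun u => f u - k * (u - s)) (Set.Ici 0) s :=
    (hcont.sub (by fun_prop)) s hs.le
  have hfs : f s - k * (s - s) < Ks - e / 2 := by
    have := hleft s hs.le le_rfl
    linarith
  have hev := hcs.eventually (gt_mem_nhds hfs)
  rw [eventually_nhdsWithin_iff, Metric.eventually_nhds_iff] at hev
  obtain ⟨h, hh, hev⟩ := hev
  -- line through (s, Ks - ε h/2) slope k + ε
  set ε := min (e / 4 / s) (e / 4 / h) with hε
  have hεpos : 0 < ε := lt_min (by positivity) (by positivity)
  have h1 : ε * s ≤ e / 4 := by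
    calc ε * s ≤ e / 4 / s * s := mul_le_mul_of_nonneg_right (min_le_left _ _) hs.le
      _ = e / 4 := by field_simp
  have h2 : ε * h ≤ e / 4 := by
    calc ε * h ≤ e / 4 / h * h := mul_le_mul_of_nonneg_right (min_le_right _ _) hh.le
      _ = e / 4 := by field_simp
  have key : concaveMajorant f s ≤ (Ks - ε * h / 2 - (k + ε) * s) + (k + ε) * s := by
    apply cm_le_line _ hs.le
    intro u hu
    rcases le_total u s with hus | hus
    · have := hleft u hu hus
      nlinarith
    · by_cases hu2 : u - s < h
      · have := hev (y := u) (by rw [Real.dist_eq, abs_of_nonneg (by linarith)]; exact hu2) hu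
        nlinarith [mul_nonneg hεpos.le (sub_nonneg.2 hus)]
      · have := hle u hu
        push Not at hu2
        nlinarith [mul_le_mul_of_nonneg_left hu2 hεpos.le, mul_pos hεpos hh]
  have : 0 < ε * h := mul_pos hεpos hh
  linarith

/-- existence of a contact point to the right -/
lemma right_contact {f : ℝ → ℝ} (hcont : ContinuousOn f (Set.Ici 0)) (hf : HasMaj f)
    (hsub : ∀ ε > 0, ∃ A, ∀ u, 0 ≤ u → f u ≤ A + ε * u)
    {s : ℝ} (hs : 0 < s) {k : ℝ} (hk0 : 0 < k)
    (hk : ∀ u, 0 ≤ u → concaveMajorant f u ≤ concaveMajorant f s + k * (u - s)) :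
    ∃ d, s ≤ d ∧ f d = concaveMajorant f s + k * (d - s) := by
  set Ks := concaveMajorant f s with hKs
  have hle : ∀ u, 0 ≤ u → f u ≤ Ks + k * (u - s) := fun u hu => (le_cm hf hu).trans (hk u hu)
  obtain ⟨A, hA⟩ := hsub (k / 4) (by linarith)
  -- beyond T the path stays under a line of smaller slope
  obtain ⟨T, hTs, hT⟩ : ∃ T, s < T ∧ ∀ u, T ≤ u → f u ≤ Ks - 1 + (k / 2) * (u - s) := by
    refine ⟨max (s + 1) ((A - Ks + 1 + k / 2 * s) * 4 / k), by
      exact lt_of_lt_of_le (by linarith) (le_max_left _ _), ?_⟩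
    intro u hu
    have h1 : (A - Ks + 1 + k / 2 * s) * 4 / k ≤ u := (le_max_right _ _).trans hu
    have h2 : s + 1 ≤ u := (le_max_left _ _).trans hu
    rw [div_le_iff₀ hk0] at h1
    have := hA u (by linarith)
    linarith
  have hc2 : ContinuousOn (fun u => f u - k * (u - s)) (Set.Icc s T) :=
    (hcont.mono (fun x hx => hs.le.trans hx.1)).sub (by fun_prop)
  obtain ⟨d, hd, hmax⟩ := isCompact_Icc.exists_isMaxOn (Set.nonempty_Icc.2 hTs.le) hc2
  refine ⟨d, hd.1, ?_⟩
  by_contra hne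
  have hlt : f d < Ks + k * (d - s) := lt_of_le_of_ne (hle d (hs.le.trans hd.1)) hne
  set e := min 1 (Ks + k * (d - s) - f d) with he
  have hepos : 0 < e := lt_min one_pos (by linarith)
  have hright : ∀ u, s ≤ u → u ≤ T → f u ≤ Ks + k * (u - s) - e := by
    intro u h1 h2
    have := hmax ⟨h1, h2⟩
    simp only [Set.mem_ofPred_eq] at this
    have := min_le_right 1 (Ks + k * (d - s) - f d)
    linarith
  have he1 : e ≤ 1 := min_le_left _ _
  have hcs : ContinuousWithinAt (fun u => f u - k * (u - s)) (Set.Ici 0) s :=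
    (hcont.sub (by fun_prop)) s hs.le
  have hfs : f s - k * (s - s) < Ks - e / 2 := by
    have := hright s le_rfl hTs.le
    linarith
  have hev := hcs.eventually (gt_mem_nhds hfs)
  rw [eventually_nhdsWithin_iff, Metric.eventually_nhds_iff] at hev
  obtain ⟨h, hh, hev⟩ := hev
  set ε := min (k / 2) (min (e / 4 / (T - s)) (e / 4 / h)) with hε
  have hTs' : 0 < T - s := by linarith
  have hεpos : 0 < ε := lt_min (by positivity) (lt_min (by positivity) (by positivity))
  have hεk : ε ≤ k / 2 := min_le_left _ _
  have h1 : ε * (T - s) ≤ e / 4 := by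
    calc ε * (T - s) ≤ e / 4 / (T - s) * (T - s) :=
          mul_le_mul_of_nonneg_right ((min_le_right _ _).trans (min_le_left _ _)) hTs'.le
      _ = e / 4 := by field_simp
  have h2 : ε * h ≤ e / 4 := by
    calc ε * h ≤ e / 4 / h * h :=
          mul_le_mul_of_nonneg_right ((min_le_right _ _).trans (min_le_right _ _)) hh.le
      _ = e / 4 := by field_simp
  have key : concaveMajorant f s ≤ (Ks - ε * h / 2 - (k - ε) * s) + (k - ε) * s := by
    apply cm_le_line _ hs.le
    intro u hu
    rcases le_total u s with hus | hus
    · by_cases hu2 : s - u < h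
      · have := hev (y := u) (by
          rw [Real.dist_eq, abs_sub_comm, abs_of_nonneg (by linarith)]; exact hu2) hu
        nlinarith [mul_nonneg hεpos.le (sub_nonneg.2 hus)]
      · have := hle u hu
        push Not at hu2
        nlinarith [mul_le_mul_of_nonneg_left hu2 hεpos.le, mul_pos hεpos hh]
    · rcases le_total u T with huT | huT
      · have := hright u hus huT
        have h3 : ε * (u - s) ≤ ε * (T - s) := mul_le_mul_of_nonneg_left (by linarith) hεpos.le
        nlinarith
      · have := hT u huT
        have h3 : (k / 2) * (u - s) ≤ (k - ε) * (u - s) :=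
          mul_le_mul_of_nonneg_right (by linarith) (by linarith)
        nlinarith
  have : 0 < ε * h := mul_pos hεpos hh
  linarith

structure Face (f : ℝ → ℝ) (m k g d : ℝ) : Prop where
  g_pos : 0 < g
  le : ∀ u, 0 ≤ u → f u ≤ m + k * u
  eq_g : f g = m + k * g
  eq_d : f d = m + k * d
  lt : ∀ u, g < u → u < d → f u < m + k * u

lemma HasMaj.of_line {f : ℝ → ℝ} {m k : ℝ} (h : ∀ u, 0 ≤ u → f u ≤ m + k * u) : HasMaj f :=
  ⟨_, line_concave m k, h⟩

/-- if the majorant lies under a line and touches it at two points, it coincides in between -/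
lemma cm_eq_line {f : ℝ → ℝ} (hf : HasMaj f) {m k g s : ℝ} (hg : 0 ≤ g)
    (hle : ∀ u, 0 ≤ u → concaveMajorant f u ≤ m + k * u)
    (h1 : concaveMajorant f g = m + k * g) (h2 : concaveMajorant f s = m + k * s)
    {u : ℝ} (hgu : g ≤ u) (hus : u ≤ s) : concaveMajorant f u = m + k * u := by
  apply le_antisymm (hle u (hg.trans hgu))
  rcases eq_or_lt_of_le hgu with rfl | hgu'
  · exact h1.ge
  have hpos : 0 < s - g := by linarith
  have ha : 0 ≤ (s - u) / (s - g) := div_nonneg (by linarith) hpos.le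
  have hb : 0 ≤ (u - g) / (s - g) := div_nonneg (by linarith) hpos.le
  have hab : (s - u) / (s - g) + (u - g) / (s - g) = 1 := by field_simp; ring
  have hs0 : s ∈ Set.Ici (0:ℝ) := hg.trans (hgu.trans hus)
  have hg0 : g ∈ Set.Ici (0:ℝ) := hg
  have := (cm_concave hf).2 hg0 hs0 ha hb hab
  simp only [smul_eq_mul] at this
  rw [h1, h2] at this
  have e1 : (s - u) / (s - g) * g + (u - g) / (s - g) * s = u := by field_simp; ring
  have e2 : (s - u) / (s - g) * (m + k * g) + (u - g) / (s - g) * (m + k * s) = m + k * u := by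
    field_simp; ring
  rw [e1, e2] at this
  exact this

lemma rightDeriv_line {c : ℝ → ℝ} {m k u s : ℝ} (hus : u < s)
    (h : ∀ v, u ≤ v → v ≤ s → c v = m + k * v) : rightDeriv c u = k := by
  unfold rightDeriv
  have h1 : HasDerivWithinAt (fun v => m + k * v) k (Set.Ioi u) u := by
    have : HasDerivAt (fun v : ℝ => m + k * v) k u := by
      simpa using ((hasDerivAt_id u).const_mul k).const_add m
    exact this.hasDerivWithinAt
  have h2 : HasDerivWithinAt c k (Set.Ioi u) u := by
    refine h1.congr_of_eventuallyEq ?_ (h u le_rfl hus.le)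
    filter_upwards [Ioo_mem_nhdsGT hus] with v hv
    exact h v hv.1.le hv.2.le
  exact h2.derivWithin (uniqueDiffWithinAt_Ioi u)

namespace Face
variable {f : ℝ → ℝ} {m k g d : ℝ}

lemma hasMaj (h : Face f m k g d) : HasMaj f := HasMaj.of_line h.le

lemma cm_eq (h : Face f m k g d) {u : ℝ} (h1 : g ≤ u) (h2 : u ≤ d) :
    concaveMajorant f u = m + k * u := by
  have hle : ∀ u, 0 ≤ u → concaveMajorant f u ≤ m + k * u := fun u hu => cm_le_line h.le hu
  have hg := h.g_pos
  refine cm_eq_line h.hasMaj hg.le hle ?_ ?_ h1 h2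
  · exact le_antisymm (hle g hg.le) (h.eq_g ▸ le_cm h.hasMaj hg.le)
  · have : 0 ≤ d := by linarith
    exact le_antisymm (hle d this) (h.eq_d ▸ le_cm h.hasMaj this)

lemma slope (h : Face f m k g d) {u : ℝ} (h1 : g ≤ u) (h2 : u < d) :
    rightDeriv (concaveMajorant f) u = k :=
  rightDeriv_line h2 fun _ hv hv2 => h.cm_eq (h1.trans hv) hv2

lemma fv (h : Face f m k g d) {u : ℝ} (h1 : g < u) (h2 : u ≤ d) :
    firstVertex f u = d := by
  unfold firstVertex
  apply le_antisymm
  · apply csInf_le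
    · exact ⟨u, fun v hv => hv.1⟩
    · exact ⟨h2, by rw [h.cm_eq (h1.le.trans h2) le_rfl, h.eq_d]⟩
  · apply le_csInf
    · exact ⟨d, h2, by rw [h.cm_eq (h1.le.trans h2) le_rfl, h.eq_d]⟩
    · rintro v ⟨hv, hv2⟩
      by_contra hlt
      push Not at hlt
      have := h.lt v (h1.trans_le hv) hlt
      rw [h.cm_eq (h1.le.trans hv) hlt.le] at hv2
      linarith

/-- perturbation of a face -/
lemma add (h : Face f m k g d) {φ : ℝ → ℝ} {a : ℝ} {f' : ℝ → ℝ}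
    (hf' : ∀ u, 0 ≤ u → f' u = f u + φ u) (hgd : g ≤ d)
    (hg : φ g = a) (hd : φ d = a) (hout : ∀ u, 0 ≤ u → (u ≤ g ∨ d ≤ u) → φ u ≤ a)
    (hin : ∀ u, g < u → u < d → f u + φ u < m + a + k * u) : Face f' (m + a) k g d where
  g_pos := h.g_pos
  le u hu := by
    rw [hf' u hu]
    by_cases h1 : g < u ∧ u < d
    · exact (hin u h1.1 h1.2).le
    · have := hout u hu (by by_contra hh; push Not at hh; exact h1 hh)
      have := h.le u hu
      linarith
  eq_g := by rw [hf' g h.g_pos.le, hg, h.eq_g]; ring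
  eq_d := by rw [hf' d (h.g_pos.le.trans hgd), hd, h.eq_d]; ring
  lt u h1 h2 := by
    rw [hf' u (h.g_pos.le.trans h1.le)]
    exact hin u h1 h2

end Face

def Sublin (f : ℝ → ℝ) : Prop := ∀ ε > 0, ∃ A, ∀ u, 0 ≤ u → |f u| ≤ A + ε * u

lemma Sublin.hasMaj {f : ℝ → ℝ} (h : Sublin f) : HasMaj f := by
  obtain ⟨A, hA⟩ := h 1 one_pos
  exact HasMaj.of_line fun u hu => (le_abs_self _).trans (hA u hu)

lemma Sublin.cm_mono {f : ℝ → ℝ} (h : Sublin f) {s t : ℝ} (hs : 0 < s) (hst : s ≤ t) :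
    concaveMajorant f s ≤ concaveMajorant f t := by
  have ht : 0 < t := hs.trans_le hst
  have hslope : 0 ≤ rightDeriv (concaveMajorant f) t := by
    by_contra hneg
    push Not at hneg
    set κ := rightDeriv (concaveMajorant f) t with hκ
    obtain ⟨A, hA⟩ := h (-κ / 2) (by linarith)
    set C := concaveMajorant f t - κ * t with hC
    have : ∀ u, 0 ≤ u → -A + κ / 2 * u ≤ C + κ * u := by
      intro u hu
      have h1 := cm_supergradient h.hasMaj ht hu
      have h2 := le_cm h.hasMaj hu
      have h3 := (abs_le.1 (hA u hu)).1
      rw [← hκ] at h1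
      linarith
    have h4 := this (2 * (|C + A| + 1) / (-κ)) (div_nonneg (by positivity) (by linarith))
    have h5 : κ / 2 * (2 * (|C + A| + 1) / (-κ)) = -(|C + A| + 1) := by
      have : κ ≠ 0 := hneg.ne
      field_simp
    have h6 := le_abs_self (C + A)
    linarith
  have := cm_supergradient h.hasMaj ht hs.le
  nlinarith

lemma exists_rat_seq_between {a b : ℝ} (hab : a < b) {p : ℝ → Prop}
    (h : ∀ u : ℚ, a < u → (u:ℝ) < b → p u) {F : ℝ → ℝ} (q : ℝ)
    (hF : ContinuousWithinAt F (Set.Ioo a b) a) (hp : ∀ u, a < u → u < b → p u → F u ≤ q) :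
    F a ≤ q := by
  by_contra hlt
  push Not at hlt
  have hev := hF.eventually (lt_mem_nhds hlt)
  rw [eventually_nhdsWithin_iff, Metric.eventually_nhds_iff] at hev
  obtain ⟨e, he, hev⟩ := hev
  obtain ⟨u, h1, h2⟩ := exists_rat_btwn (show a < min b (a + e) from lt_min hab (by linarith))
  have h3 := h2.trans_le (min_le_left _ _)
  have h4 := h2.trans_le (min_le_right _ _)
  have := hev (y := u) (by rw [Real.dist_eq, abs_of_pos (by linarith)]; linarith) ⟨h1, h3⟩
  have := hp u h1 h3 (h u h1 h3)
  linarith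

lemma stat_B {f : ℝ → ℝ} (hcont : ContinuousOn f (Set.Ici 0)) (hsub : Sublin f) {s : ℚ}
    (hs : 0 < (s:ℝ)) {t : ℝ} (hst : s ≤ t) {q : ℝ}
    (h : ∀ u : ℚ, 0 ≤ (u:ℝ) → (u:ℝ) ≤ s →
      f u + rightDeriv (concaveMajorant f) s * (t - u) ≤ q) : f t ≤ q := by
  set k := rightDeriv (concaveMajorant f) s with hk
  have hsg : ∀ u, 0 ≤ u → concaveMajorant f u ≤ concaveMajorant f s + k * (u - s) :=
    fun u hu => cm_supergradient hsub.hasMaj hs hu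
  obtain ⟨g, hg0, hgs, hg⟩ := left_contact hcont hsub.hasMaj hs hsg
  have hgq : f g + k * (t - g) ≤ q := by
    rcases eq_or_lt_of_le hgs with rfl | hlt
    · exact h s hg0 le_rfl
    · refine exists_rat_seq_between (F := fun u => f u + k * (t - u)) hlt
        (p := fun u => f u + k * (t - u) ≤ q)
        (fun u h1 h2 => h u (hg0.trans h1.le) h2.le) q ?_ (fun _ _ _ h => h)
      exact ((hcont g hg0).mono (s := Set.Ioo g (s:ℝ)) (fun x hx => hg0.trans hx.1.le)).add (by fun_prop)
  have h1 := le_cm hsub.hasMaj (hs.le.trans hst)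
  have h2 := hsg t (hs.le.trans hst)
  have : concaveMajorant f s + k * (t - s) = f g + k * (t - g) := by rw [hg]; ring
  linarith

lemma stat_X {f : ℝ → ℝ} (hcont : ContinuousOn f (Set.Ici 0)) (hsub : Sublin f) {s : ℚ}
    (hs : 0 < (s:ℝ)) {t : ℝ} (hst : s ≤ t) {q : ℝ}
    (h : ∀ u : ℚ, 0 < (u:ℝ) → (u:ℝ) ≤ s →
      q ≤ 2 * concaveMajorant f u - f u + rightDeriv (concaveMajorant f) u * (s - u)) :
    q ≤ 2 * concaveMajorant f t - f t := by
  set k := rightDeriv (concaveMajorant f) s with hk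
  have hsg : ∀ u, 0 ≤ u → concaveMajorant f u ≤ concaveMajorant f s + k * (u - s) :=
    fun u hu => cm_supergradient hsub.hasMaj hs hu
  obtain ⟨g, hg0, hgs, hg⟩ := left_contact hcont hsub.hasMaj hs hsg
  have hq : q ≤ concaveMajorant f s := by
    rcases eq_or_lt_of_le hgs with rfl | hlt
    · have := h s hs le_rfl
      simp only [sub_self, mul_zero, add_zero] at hg this
      linarith
    · set m := concaveMajorant f s - k * s with hm
      have hline : ∀ u, g ≤ u → u ≤ s → concaveMajorant f u = m + k * u := by
        intro u h1 h2
        refine cm_eq_line hsub.hasMaj hg0 (fun u hu => by have := hsg u hu; linarith) ?_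
          (by rw [hm]; ring) h1 h2
        apply le_antisymm
        · have := hsg g hg0; linarith
        · have := le_cm hsub.hasMaj hg0; rw [hg] at this; linarith
      have := exists_rat_seq_between (F := fun u => -(2 * (m + k * u) - f u + k * (s - u))) hlt
        (p := fun u => q ≤ 2 * concaveMajorant f u - f u + rightDeriv (concaveMajorant f) u * (s - u))
        (fun u h1 h2 => h u (hg0.trans_lt h1) h2.le) (-q) ?_ ?_
      · rw [hg] at this
        have e : concaveMajorant f s = m + k * s := by rw [hm]; ring
        rw [e] at this ⊢
        nlinarith
      · have := (hcont g hg0).mono (s := Set.Ioo g (s:ℝ)) (fun x hx => hg0.trans hx.1.le)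
        have h2 : ContinuousWithinAt (fun u => 2 * (m + k * u) + k * (s - u)) (Set.Ioo g (s:ℝ)) g := by
          fun_prop
        refine ((h2.sub this).neg).congr (fun u _ => ?_) ?_ <;> simp <;> ring
      · intro u h1 h2 h3
        rw [hline u h1.le h2.le, rightDeriv_line h2 fun v hv hv2 => hline v (h1.le.trans hv) hv2] at h3
        linarith
  have h1 := le_cm hsub.hasMaj (hs.le.trans hst)
  have h2 := hsub.cm_mono hs hst
  linarith

/-- existence of a face around `s` -/
lemma exists_face {f : ℝ → ℝ} (hcont : ContinuousOn f (Set.Ici 0)) (h0 : f 0 = 0)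
    (hsub : Sublin f) {s : ℝ} (hs : 0 < s) (hneg : f s < 0)
    (hsteep : ∀ C : ℝ, ∃ u, 0 < u ∧ C * u < f u) (hunb : ∀ C : ℝ, ∃ u, 0 ≤ u ∧ C < f u) :
    ∃ m k g d, Face f m k g d ∧ g < s ∧ s < d := by
  set k := rightDeriv (concaveMajorant f) s with hk
  have hsg : ∀ u, 0 ≤ u → concaveMajorant f u ≤ concaveMajorant f s + k * (u - s) :=
    fun u hu => cm_supergradient hsub.hasMaj hs hu
  set m := concaveMajorant f s - k * s with hm
  have hle : ∀ u, 0 ≤ u → f u ≤ m + k * u := fun u hu => by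
    have := (le_cm hsub.hasMaj hu).trans (hsg u hu)
    rw [hm]; linarith
  have hm0 : 0 ≤ m := by have := hle 0 le_rfl; rw [h0] at this; linarith
  have hk0 : 0 < k := by
    by_contra hn
    push Not at hn
    obtain ⟨u, hu, hu2⟩ := hunb m
    have := hle u hu
    nlinarith
  obtain ⟨g0, hg0, hg0s, hg0e⟩ := left_contact hcont hsub.hasMaj hs hsg
  obtain ⟨d0, hd0s, hd0e⟩ := right_contact hcont hsub.hasMaj
    (fun ε hε => by
      obtain ⟨A, hA⟩ := hsub ε hε
      exact ⟨A, fun u hu => (le_abs_self _).trans (hA u hu)⟩) hs hk0 hsg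
  have hcl : ∀ a b : ℝ, 0 ≤ a → IsCompact {u | u ∈ Set.Icc a b ∧ f u - (m + k * u) = 0} := by
    intro a b ha
    have hc2 : ContinuousOn (fun u => f u - (m + k * u)) (Set.Icc a b) :=
      (hcont.mono (fun x hx => ha.trans hx.1)).sub (by fun_prop)
    have := hc2.preimage_isClosed_of_isClosed isClosed_Icc (isClosed_singleton (x := (0:ℝ)))
    exact isCompact_Icc.of_isClosed_subset this (fun x hx => hx.1)
  obtain ⟨g, ⟨⟨hg1, hg2⟩, hg3⟩, hgmax⟩ := (hcl 0 s le_rfl).exists_isGreatest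
    ⟨g0, ⟨hg0, hg0s⟩, by rw [hg0e, hm]; ring⟩
  obtain ⟨d, ⟨⟨hd1, hd2⟩, hd3⟩, hdmin⟩ := (hcl s d0 hs.le).exists_isLeast
    ⟨d0, ⟨hd0s, le_rfl⟩, by rw [hd0e, hm]; ring⟩
  have hks : 0 < k * s := mul_pos hk0 hs
  have hgs : g ≠ s := by rintro rfl; linarith
  have hds : d ≠ s := by rintro rfl; linarith
  have hgs' : g < s := lt_of_le_of_ne hg2 hgs
  have hds' : s < d := lt_of_le_of_ne hd1 (Ne.symm hds)
  have hmpos : 0 < m := by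
    obtain ⟨u, hu, hu2⟩ := hsteep k
    have := hle u hu.le
    linarith
  refine ⟨m, k, g, d, ⟨?_, hle, by linarith, by linarith, ?_⟩, hgs', hds'⟩
  · refine lt_of_le_of_ne hg1 ?_
    rintro rfl
    rw [h0] at hg3; linarith
  · intro u h1 h2
    refine lt_of_le_of_ne (hle u (hg1.trans h1.le)) ?_
    intro he
    rcases le_total u s with hus | hus
    · have := hgmax ⟨⟨hg1.trans h1.le, hus⟩, by rw [he]; ring⟩
      linarith
    · have := hdmin ⟨⟨hus, h2.le.trans hd2⟩, by rw [he]; ring⟩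
      linarith


/-! ### Probability: relation with Mathlib's Brownian motion -/

open scoped NNReal ENNReal

lemma comap_le_natSigma {Ω E : Type*} [MeasurableSpace E] (Y : ℝ → Ω → E) {u s : ℝ}
    (h0 : 0 ≤ u) (h : u ≤ s) :
    MeasurableSpace.comap (Y u) inferInstance ≤ natSigma Y s :=
  le_iSup (fun u : Set.Icc (0:ℝ) s => MeasurableSpace.comap (Y u) inferInstance) ⟨u, h0, h⟩

lemma natSigma_measurable {Ω E : Type*} [MeasurableSpace E] (Y : ℝ → Ω → E) {u s : ℝ}
    (h0 : 0 ≤ u) (h : u ≤ s) : @Measurable _ _ (natSigma Y s) _ (Y u) :=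
  measurable_iff_comap_le.2 (comap_le_natSigma Y h0 h)

section BM
variable {Ω : Type*} [MeasurableSpace Ω] {P : Measure Ω} [IsProbabilityMeasure P]
  {B : ℝ → Ω → ℝ}

lemma IsBrownianMotion.pre (hB : IsBrownianMotion P B) :
    IsPreBrownianReal (fun (t : ℝ≥0) ω => B t ω) P := by
  apply HasIndepIncrements.isPreBrownianReal_of_hasLaw
  · intro t
    refine ⟨(hB.measurable _).aemeasurable, ?_⟩
    have h := hB.incr_law 0 t le_rfl t.2
    simp only [sub_zero, Real.toNNReal_coe] at h
    rw [← h]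
    apply Measure.map_congr
    filter_upwards [hB.init] with ω hω
    simp [hω]
  · rw [hasIndepIncrements_iff_nat]
    intro t ht
    rw [iIndepFun_iff]
    intro S
    induction S using Finset.induction_on_max with
    | empty => intro f' _; simp
    | insert a S hmax ih =>
      intro f' hf
      have ha : a ∉ S := fun h => lt_irrefl _ (hmax a h)
      rw [Finset.prod_insert ha, ← ih (fun i hi => hf i (Finset.mem_insert_of_mem hi)),
        Finset.set_biInter_insert]
      refine (Indep_iff _ _ _).1 (hB.incr_indep (t a) (t (a+1)) (t a).2
        (by exact_mod_cast ht (Nat.le_succ a))) _ _ (hf a (Finset.mem_insert_self _ _)) ?_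
      refine Finset.measurableSet_biInter _ fun i hi => ?_
      have h1 := hf i (Finset.mem_insert_of_mem hi)
      have hlt := hmax i hi
      have : @Measurable _ _ (natSigma B (t a)) _ (fun ω => B (t (i+1)) ω - B (t i) ω) := by
        apply Measurable.sub
        · exact natSigma_measurable B (t _).2 (by exact_mod_cast ht hlt)
        · exact natSigma_measurable B (t _).2 (by exact_mod_cast ht hlt.le)
      exact measurable_iff_comap_le.1 this _ h1

/-- the path at nonnegative rational times -/
def ratPath (B : ℝ → Ω → ℝ) (ω : Ω) : ℚ≥0 → ℝ := fun r => B (r : ℝ) ω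

lemma IsBrownianMotion.measurable_ratPath (hB : IsBrownianMotion P B) : Measurable (ratPath B) :=
  measurable_pi_lambda _ fun _ => hB.measurable _

lemma rat_dense_Ici {p : ℝ → Prop} (hp : IsClosed {x | p x}) (h : ∀ r : ℚ≥0, p (r : ℝ)) {u : ℝ} (hu : 0 ≤ u) :
    p u := by
  by_contra hn
  have ho : IsOpen {x | ¬ p x} := hp.isOpen_compl
  obtain ⟨ε, he, hb⟩ := Metric.isOpen_iff.1 ho u hn
  obtain ⟨r, hr1, hr2⟩ := exists_rat_btwn (show u < u + ε by linarith)
  have hr0 : (0:ℚ) ≤ r := by exact_mod_cast (hu.trans hr1.le)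
  refine hb (a := (r:ℝ)) ?_ (by have := h ⟨r, hr0⟩; simpa [NNRat.cast_def, Rat.cast_def] using this)
  rw [Metric.mem_ball, Real.dist_eq, abs_lt]; constructor <;> linarith

lemma rat_dense_cont {f g : ℝ → ℝ} (hf : ContinuousOn f (Set.Ici 0)) (hg : ContinuousOn g (Set.Ici 0))
    (h : ∀ r : ℚ≥0, f (r : ℝ) ≤ g (r : ℝ)) {u : ℝ} (hu : 0 ≤ u) : f u ≤ g u := by
  have h1 : Continuous fun x => f (max x 0) := hf.comp_continuous (by fun_prop) (fun x => Set.mem_Ici.2 (le_max_right _ _))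
  have h2 : Continuous fun x => g (max x 0) := hg.comp_continuous (by fun_prop) (fun x => Set.mem_Ici.2 (le_max_right _ _))
  have := rat_dense_Ici (p := fun x => f (max x 0) ≤ g (max x 0)) (isClosed_le h1 h2) (fun r => ?_) hu
  · simpa [hu] using this
  · have : (0:ℝ) ≤ (r : ℝ) := NNRat.cast_nonneg r
    rw [max_eq_left this]; exact h r

lemma IsBrownianMotion.law_inv (hB : IsBrownianMotion P B) :
    P.map (ratPath B) = P.map (fun ω (r : ℚ≥0) => (r : ℝ) * B (1 / (r : ℝ)) ω) := by
  have hm := hB.measurable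
  rw [show ratPath B = fun ω => ((fun (r : ℚ≥0) ω => B (r : ℝ) ω) · ω) from rfl]
  rw [map_eq_iff_forall_finset_map_restrict_eq (X := fun (r : ℚ≥0) ω => B (r : ℝ) ω)
    (Y := fun (r : ℚ≥0) ω => (r : ℝ) * B (1 / (r : ℝ)) ω) (by fun_prop) (by fun_prop)]
  intro I
  let c : ℚ≥0 → ℝ≥0 := fun r => ⟨(r : ℝ), NNRat.cast_nonneg r⟩
  let J : Finset ℝ≥0 := I.image c
  have h1 := (hB.pre.hasLaw J).map_eq
  have h2 := (hB.pre.inv.hasLaw J).map_eq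
  let F : (J → ℝ) → (I → ℝ) := fun x i => x ⟨c i, Finset.mem_image_of_mem _ i.2⟩
  have hF : Measurable F := by fun_prop
  have e := congrArg (Measure.map F) (h1.trans h2.symm)
  rw [Measure.map_map hF (by fun_prop), Measure.map_map hF ?_] at e
  · exact e
  · refine measurable_pi_lambda _ fun i => ?_
    exact measurable_const.mul (hm _)

lemma IsBrownianMotion.sublin (hB : IsBrownianMotion P B) : ∀ᵐ ω ∂P, Sublin (fun t => B t ω) := by
  have hm := hB.measurable
  let S : Set (ℚ≥0 → ℝ) := {x | ∀ n : ℕ, ∃ m : ℕ, ∀ r : ℚ≥0, 0 < r → (r : ℝ) * (m+1) ≤ 1 → |x r| * (n+1) ≤ 1}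
  have hS : MeasurableSet S := by
    have : S = ⋂ n : ℕ, ⋃ m : ℕ, ⋂ r : ℚ≥0, ⋂ (_ : 0 < r), ⋂ (_ : (r:ℝ) * (m+1) ≤ 1),
        {x : ℚ≥0 → ℝ | |x r| * ((n:ℝ)+1) ≤ 1} := by
      ext x; simp [S]
    rw [this]
    refine MeasurableSet.iInter fun n => MeasurableSet.iUnion fun m => MeasurableSet.iInter fun r =>
      MeasurableSet.iInter fun _ => MeasurableSet.iInter fun _ => ?_
    exact measurableSet_le (by fun_prop) (by fun_prop)
  have h1 : ∀ᵐ ω ∂P, ratPath B ω ∈ S := by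
    filter_upwards [hB.cont, hB.init] with ω hc h0
    intro n
    have hc0 := hc 0 (Set.mem_Ici.2 le_rfl)
    obtain ⟨δ, hδ, h⟩ := Metric.continuousWithinAt_iff.1 hc0 (1/(n+1)) (by positivity)
    obtain ⟨m, hm⟩ := exists_nat_one_div_lt hδ
    refine ⟨m, fun r hr0 hr => ?_⟩
    have hrp : (0:ℝ) ≤ (r : ℝ) := NNRat.cast_nonneg r
    have h2 : (r : ℝ) < δ := by
      refine lt_of_le_of_lt ?_ hm
      rw [le_div_iff₀ (by positivity)]; exact hr
    have := h (Set.mem_Ici.2 hrp) (by rw [Real.dist_eq, sub_zero, abs_of_nonneg hrp]; exact h2)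
    rw [Real.dist_eq, h0, sub_zero, lt_div_iff₀ (by positivity)] at this
    exact this.le
  have h2 : ∀ᵐ ω ∂P, (fun (r : ℚ≥0) => (r : ℝ) * B (1 / (r : ℝ)) ω) ∈ S := by
    have e1 : ∀ᵐ x ∂(P.map (ratPath B)), x ∈ S := (ae_map_iff hB.measurable_ratPath.aemeasurable hS).2 h1
    rw [hB.law_inv] at e1
    exact (ae_map_iff (by fun_prop) hS).1 e1
  filter_upwards [h2, hB.cont] with ω h hc
  intro ε hε
  obtain ⟨n, hn⟩ := exists_nat_one_div_lt hε
  obtain ⟨m, hm⟩ := h n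
  obtain ⟨A, hA⟩ := (isCompact_Icc (a := (0:ℝ)) (b := m+1)).exists_bound_of_continuousOn
    (hc.mono (fun x hx => hx.1))
  refine ⟨max A 0, fun u hu => ?_⟩
  refine rat_dense_cont (f := fun u => |B u ω|) (g := fun u => max A 0 + ε * u) hc.abs (by fun_prop) ?_ hu
  intro r
  have hrp : (0:ℝ) ≤ (r : ℝ) := NNRat.cast_nonneg r
  rcases le_total (r : ℝ) (m+1) with hr | hr
  · have := hA _ ⟨hrp, hr⟩
    rw [Real.norm_eq_abs] at this
    have : 0 ≤ ε * (r : ℝ) := by positivity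
    linarith [le_max_left A 0]
  · have hr0 : (0:ℝ) < (r : ℝ) := lt_of_lt_of_le (by positivity) hr
    have hr0' : 0 < r := by exact_mod_cast hr0
    have := hm r⁻¹ (by positivity) (by
      push_cast
      rw [inv_mul_le_iff₀ hr0]; linarith)
    push_cast at this
    rw [one_div, inv_inv, abs_mul, abs_of_pos (inv_pos.2 hr0)] at this
    have h3 : |B (r : ℝ) ω| ≤ 1/(n+1) * (r : ℝ) := by
      rw [div_mul_eq_mul_div, le_div_iff₀ (by positivity)]
      have := mul_le_mul_of_nonneg_left this hr0.le
      rw [← mul_assoc, ← mul_assoc, mul_inv_cancel₀ hr0.ne'] at this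
      linarith
    have : 1/((n:ℝ)+1) * (r : ℝ) ≤ ε * (r : ℝ) := by gcongr
    show |B (r : ℝ) ω| ≤ _
    linarith [le_max_right A 0]

end BM

/-! ### Quasi-invariance under piecewise linear shifts -/

/-- the ramp going linearly from `0` at `p` to `1` at `q` -/
def ramp (p q u : ℝ) : ℝ := max 0 (min 1 ((u - p) / (q - p)))

lemma ramp_mul {p q : ℝ} (hpq : p < q) (u : ℝ) : ramp p q u * (q - p) = min q u - min p u := by
  have h : 0 < q - p := by linarith
  unfold ramp
  rcases le_total u p with h1 | h1
  · rw [min_eq_right (b := (u - p) / (q - p)), max_eq_left, min_eq_right h1, min_eq_right (by linarith)]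
    · ring
    · exact div_nonpos_of_nonpos_of_nonneg (by linarith) h.le
    · exact (div_nonpos_of_nonpos_of_nonneg (by linarith) h.le).trans zero_le_one
  · rw [min_eq_left h1]
    rcases le_total u q with h2 | h2
    · rw [min_eq_right (b := (u - p) / (q - p)), max_eq_right, min_eq_right h2]
      · field_simp
      · exact div_nonneg (by linarith) h.le
      · rw [div_le_one h]; linarith
    · rw [min_eq_left, max_eq_right zero_le_one, min_eq_left h2, one_mul]
      rw [one_le_div h]; linarith

section BM2
variable {Ω : Type*} [MeasurableSpace Ω] {P : Measure Ω} [IsProbabilityMeasure P]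
  {B : ℝ → Ω → ℝ}

lemma IsBrownianMotion.cov (hB : IsBrownianMotion P B) {s t : ℝ} (hs : 0 ≤ s) (ht : 0 ≤ t) :
    cov[B s, B t; P] = min s t := by
  lift s to ℝ≥0 using hs
  lift t to ℝ≥0 using ht
  have := hB.pre.covariance_eval s t
  exact this.trans (by simp)

lemma IsBrownianMotion.memLp (hB : IsBrownianMotion P B) {s : ℝ} (hs : 0 ≤ s) :
    MemLp (B s) 2 P :=
  (hB.pre.isGaussianProcess.hasGaussianLaw_eval (⟨s, hs⟩ : ℝ≥0)).memLp_two

lemma IsBrownianMotion.ramp_ac (hB : IsBrownianMotion P B) {p q : ℝ} (hp : 0 ≤ p) (hpq : p < q)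
    (a : ℝ) : P.map (fun ω (r : ℚ≥0) => B r ω + a * ramp p q r) ≪ P.map (ratPath B) := by
  have hm := hB.measurable
  have hq : 0 ≤ q := hp.trans hpq.le
  let ξ : Ω → ℝ := fun ω => B q ω - B p ω
  let X : Unit → Ω → ℝ := fun _ => B q - B p
  let Y : ℚ≥0 → Ω → ℝ := fun r => B r - ramp p q r • (B q - B p)
  have hnn : ∀ r : ℚ≥0, (0:ℝ) ≤ r := fun r => NNRat.cast_nonneg r
  have hind0 : IndepFun (fun ω s ↦ X s ω) (fun ω t ↦ Y t ω) P := by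
    apply IsGaussianProcess.indepFun_of_covariance_eq_zero
    · apply hB.pre.isGaussianProcess.of_isGaussianProcess
      obtain ⟨p', hp'⟩ : ∃ p' : ℝ≥0, (p':ℝ) = p := ⟨⟨p, hp⟩, rfl⟩
      obtain ⟨q', hq'⟩ : ∃ q' : ℝ≥0, (q':ℝ) = q := ⟨⟨q, hq⟩, rfl⟩
      rintro (t | r)
      · refine ⟨{p', q'}, ContinuousLinearMap.proj ⟨q', by simp⟩ -
          ContinuousLinearMap.proj ⟨p', by simp⟩, fun ω => ?_⟩
        simp [X, hp', hq']
      · obtain ⟨r', hr'⟩ : ∃ r' : ℝ≥0, (r':ℝ) = r := ⟨⟨r, hnn r⟩, rfl⟩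
        refine ⟨{p', q', r'}, ContinuousLinearMap.proj ⟨r', by simp⟩ -
          ramp p q r • (ContinuousLinearMap.proj ⟨q', by simp⟩ -
          ContinuousLinearMap.proj ⟨p', by simp⟩), fun ω => ?_⟩
        simp [Y, hp', hq', hr']
    · intro _; exact ((hm _).sub (hm _)).aemeasurable
    · intro r; exact ((hm _).sub (((hm _).sub (hm _)).const_smul _)).aemeasurable
    · intro _ r
      have m1 := hB.memLp hq
      have m2 := hB.memLp hp
      have m3 := hB.memLp (hnn r)
      show cov[B q - B p, B r - ramp p q r • (B q - B p); P] = 0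
      rw [covariance_sub_right (m1.sub m2) m3 ((m1.sub m2).const_smul _),
        covariance_smul_right, covariance_sub_left m1 m2 m3,
        covariance_sub_left m1 m2 (m1.sub m2), covariance_sub_right m1 m1 m2,
        covariance_sub_right m2 m1 m2, hB.cov hq (hnn r), hB.cov hp (hnn r), hB.cov hq hq,
        hB.cov hq hp, hB.cov hp hq, hB.cov hp hp]
      simp only [min_self, min_eq_left hpq.le, min_eq_right hpq.le]
      have := ramp_mul hpq (r:ℝ)
      linarith
  have hind : IndepFun ξ (fun ω r => Y r ω) P :=
    hind0.comp (φ := fun x : Unit → ℝ => x ()) (ψ := id) (measurable_pi_apply _) measurable_id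
  have hξ : Measurable ξ := (hm _).sub (hm _)
  have hY : Measurable (fun ω r => Y r ω) := measurable_pi_lambda _ fun r =>
    ((hm _).sub (((hm _).sub (hm _)).const_smul _))
  let Φ : ℝ × (ℚ≥0 → ℝ) → (ℚ≥0 → ℝ) := fun z r => z.2 r + z.1 * ramp p q r
  have hΦ : Measurable Φ := by fun_prop
  have hv : Real.toNNReal (q - p) ≠ 0 := by
    simp; exact hpq
  have hlaw : P.map ξ = gaussianReal 0 (Real.toNNReal (q - p)) := hB.incr_law p q hp hpq.le
  have hlaw2 : P.map (fun ω => ξ ω + a) = gaussianReal a (Real.toNNReal (q - p)) := by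
    have := gaussianReal_map_add_const (μ := 0) (v := Real.toNNReal (q - p)) a
    rw [← hlaw, Measure.map_map (by fun_prop) hξ, zero_add] at this
    exact this
  have e1 : P.map (ratPath B) = ((P.map ξ).prod (P.map (fun ω r => Y r ω))).map Φ := by
    rw [← (indepFun_iff_map_prod_eq_prod_map_map hξ.aemeasurable hY.aemeasurable).1 hind,
      Measure.map_map hΦ (hξ.prodMk hY)]
    congr 1
    funext ω r
    simp [Φ, ratPath, Y, ξ]; ring
  have hind' : IndepFun (fun ω => ξ ω + a) (fun ω r => Y r ω) P :=
    hind.comp (φ := fun x => x + a) (ψ := id) (by fun_prop) measurable_id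
  have e2 : P.map (fun ω (r : ℚ≥0) => B r ω + a * ramp p q r) =
      ((P.map (fun ω => ξ ω + a)).prod (P.map (fun ω r => Y r ω))).map Φ := by
    rw [← (indepFun_iff_map_prod_eq_prod_map_map (hξ.add_const a).aemeasurable hY.aemeasurable).1 hind',
      Measure.map_map hΦ ((hξ.add_const a).prodMk hY)]
    congr 1
    funext ω r
    simp [Φ, Y, ξ]; ring
  rw [e1, e2, hlaw, hlaw2]
  refine Measure.AbsolutelyContinuous.map ?_ hΦ
  exact Measure.AbsolutelyContinuous.prod ((gaussianReal_absolutelyContinuous a hv).trans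
    (gaussianReal_absolutelyContinuous' 0 hv)) Measure.AbsolutelyContinuous.rfl

/-- admissible shifts -/
def Adm (P : Measure Ω) (B : ℝ → Ω → ℝ) (φ : ℝ → ℝ) : Prop :=
  P.map (fun ω (r : ℚ≥0) => B r ω + φ r) ≪ P.map (ratPath B)

lemma IsBrownianMotion.adm_add (hB : IsBrownianMotion P B) {φ ψ : ℝ → ℝ} (h1 : Adm P B φ)
    (h2 : Adm P B ψ) : Adm P B (fun u => φ u + ψ u) := by
  have hm := hB.measurable
  refine Measure.AbsolutelyContinuous.trans ?_ h2
  have := Measure.AbsolutelyContinuous.map h1 (f := fun (x : ℚ≥0 → ℝ) r => x r + ψ r) (by fun_prop)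
  rw [Measure.map_map (by fun_prop) (by fun_prop),
    Measure.map_map (by fun_prop) hB.measurable_ratPath] at this
  simpa [Function.comp_def, ratPath, add_assoc] using this

/-- tent function of height one around `x` with half-width `δ` -/
def tent (x δ u : ℝ) : ℝ := ramp (x - δ) x u - ramp x (x + δ) u

lemma IsBrownianMotion.adm_ramp (hB : IsBrownianMotion P B) {p q : ℝ} (hp : 0 ≤ p) (hpq : p < q)
    (a : ℝ) : Adm P B (fun u => a * ramp p q u) := hB.ramp_ac hp hpq a

lemma IsBrownianMotion.adm_tent (hB : IsBrownianMotion P B) {x δ : ℝ} (hδ : 0 < δ) (hx : δ ≤ x)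
    (a : ℝ) : Adm P B (fun u => a * tent x δ u) := by
  have := hB.adm_add (hB.adm_ramp (p := x - δ) (q := x) (by linarith) (by linarith) a)
    (hB.adm_ramp (p := x) (q := x + δ) (by linarith) (by linarith) (-a))
  have e : (fun u => a * tent x δ u) = fun u => a * ramp (x - δ) x u + -a * ramp x (x + δ) u := by
    funext u; unfold tent; ring
  rw [e]; exact this

end BM2

lemma ramp_cont {p q : ℝ} : Continuous (ramp p q) := by unfold ramp; fun_prop
lemma tent_cont {x δ : ℝ} : Continuous (tent x δ) := by
  unfold tent; exact ramp_cont.sub ramp_cont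
lemma ramp_nonneg (p q u : ℝ) : 0 ≤ ramp p q u := le_max_left _ _
lemma ramp_le_one (p q u : ℝ) : ramp p q u ≤ 1 := max_le zero_le_one (min_le_left _ _)
lemma ramp_right {p q u : ℝ} (h : p < q) (hu : q ≤ u) : ramp p q u = 1 := by
  have := ramp_mul h u
  rw [min_eq_left hu, min_eq_left (h.le.trans hu)] at this
  exact mul_right_cancel₀ (show q - p ≠ 0 by linarith) (by linarith)
lemma ramp_left {p q u : ℝ} (h : p < q) (hu : u ≤ p) : ramp p q u = 0 := by
  have := ramp_mul h u
  rw [min_eq_right hu, min_eq_right (hu.trans h.le)] at this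
  exact mul_right_cancel₀ (show q - p ≠ 0 by linarith) (by linarith)
lemma tent_center {x δ : ℝ} (h : 0 < δ) : tent x δ x = 1 := by
  unfold tent; rw [ramp_right (by linarith) le_rfl, ramp_left (by linarith) le_rfl]; ring
lemma tent_out {x δ u : ℝ} (h : 0 < δ) (hu : u ≤ x - δ ∨ x + δ ≤ u) : tent x δ u = 0 := by
  unfold tent
  rcases hu with hu | hu
  · rw [ramp_left (by linarith) hu, ramp_left (by linarith) (by linarith)]; ring
  · rw [ramp_right (by linarith) (by linarith), ramp_right (by linarith) hu]; ring
lemma tent_nonneg {x δ : ℝ} (h : 0 < δ) (u : ℝ) : 0 ≤ tent x δ u := by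
  unfold tent
  rcases le_total u x with hu | hu
  · rw [ramp_left (p := x) (by linarith) hu]; linarith [ramp_nonneg (x - δ) x u]
  · rw [ramp_right (q := x) (by linarith) hu]; linarith [ramp_le_one x (x + δ) u]
lemma tent_le_one (x δ u : ℝ) : tent x δ u ≤ 1 := by
  unfold tent; linarith [ramp_nonneg x (x + δ) u, ramp_le_one (x - δ) x u]

/-! ### Transfer lemma -/

section Transfer
variable {Ω : Type*} [MeasurableSpace Ω] [StandardBorelSpace Ω] {P : Measure Ω}
  [IsProbabilityMeasure P] {B : ℝ → Ω → ℝ}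

lemma ae_exists_preimage {E : Type*} [MeasurableSpace E] [MeasurableEq E] {β : Ω → E}
    (hβ : Measurable β) {p : Ω → Prop} (hp : ∀ᵐ ω ∂P, p ω) :
    ∀ᵐ x ∂(P.map β), ∃ ω, p ω ∧ β ω = x := by
  have : Nonempty Ω := (inferInstance : NeZero P).1 |> fun h => by
    by_contra hne
    rw [not_nonempty_iff] at hne
    exact h (Measure.eq_zero_of_isEmpty P)
  obtain ⟨M, hMp, hM, hM1⟩ := eventually_iff_exists_mem.1 hp |> fun ⟨v, hv, h⟩ =>
    (show ∃ M : Set Ω, (∀ ω ∈ M, p ω) ∧ MeasurableSet M ∧ ∀ᵐ ω ∂P, ω ∈ M from by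
      obtain ⟨t, ht, htm, ht0⟩ := exists_measurable_superset_of_null (mem_ae_iff.1 hv)
      refine ⟨tᶜ, fun ω hω => h ω ?_, htm.compl, ?_⟩
      · by_contra hn; exact hω (ht hn)
      · rw [ae_iff]; simpa using ht0)
  have hc := compProd_map_condDistrib (μ := P) (X := β) (Y := (id : Ω → Ω)) (mβ := inferInstance)
    aemeasurable_id
  have hS : MeasurableSet {z : E × Ω | z.2 ∈ M ∧ β z.2 = z.1} :=
    (measurable_snd hM).inter (measurableSet_eq_fun (hβ.comp measurable_snd) measurable_fst)
  have h1 : ∀ᵐ z ∂(P.map fun a => (β a, id a)), z.2 ∈ M ∧ β z.2 = z.1 := by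
    rw [ae_map_iff (by fun_prop) hS]
    filter_upwards [hM1] with ω hω
    exact ⟨hω, rfl⟩
  rw [← hc] at h1
  filter_upwards [Measure.ae_ae_of_ae_compProd h1] with x hx
  obtain ⟨ω, h2, h3⟩ := hx.exists
  exact ⟨ω, hMp ω h2, h3⟩

lemma IsBrownianMotion.transfer (hB : IsBrownianMotion P B) {p : Ω → Prop} (hp : ∀ᵐ ω ∂P, p ω)
    {φ : ℝ → ℝ} (hφ : Adm P B φ) (hc : Continuous φ) :
    ∀ᵐ ω ∂P, ∃ ω', p ω' ∧ ∀ u, 0 ≤ u → B u ω' = B u ω + φ u := by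
  have hm := hB.measurable
  have h1 := ae_exists_preimage (P := P) hB.measurable_ratPath (hp.and hB.cont)
  have h2 := hφ.ae_le h1
  have h3 := ae_of_ae_map (by fun_prop) h2
  filter_upwards [h3, hB.cont] with ω ⟨ω', ⟨h4, h5⟩, h6⟩ h7
  refine ⟨ω', h4, fun u hu => ?_⟩
  have h8 : ContinuousOn (fun u => B u ω + φ u) (Set.Ici 0) := h7.add hc.continuousOn
  exact le_antisymm (rat_dense_cont h5 h8 (fun r => (congrFun h6 r).le) hu)
    (rat_dense_cont h8 h5 (fun r => (congrFun h6 r).ge) hu)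

/-! ### Conditional independence and separation -/

lemma ae_condExp_indicator_pos {Ω : Type*} {m mΩ : MeasurableSpace Ω} {P : Measure Ω}
    [IsProbabilityMeasure P] (hm : m ≤ mΩ) {S : Set Ω} (hS : MeasurableSet S) :
    ∀ᵐ ω ∂P, ω ∈ S → 0 < (P⟦S | m⟧) ω := by
  set c := P⟦S | m⟧ with hc
  have hcm : Measurable[m] c := stronglyMeasurable_condExp.measurable
  have hN : MeasurableSet[m] {ω | c ω ≤ 0} := measurableSet_le hcm measurable_const
  have hmemInt : Integrable (S.indicator fun _ => (1:ℝ)) P := (integrable_const (1:ℝ)).indicator hS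
  have h1 := setIntegral_condExp hm hmemInt hN
  have h2 : ∫ ω in {ω | c ω ≤ 0}, c ω ∂P ≤ 0 :=
    setIntegral_nonpos (hm _ hN) (fun ω hω => hω)
  rw [← hc] at h1
  rw [h1, setIntegral_indicator hS, setIntegral_const, smul_eq_mul, mul_one] at h2
  have h3 : P ({ω | c ω ≤ 0} ∩ S) = 0 := by
    rw [← measureReal_eq_zero_iff]
    exact le_antisymm h2 measureReal_nonneg
  rw [ae_iff]
  convert h3 using 2
  ext ω
  simp [and_comm]

lemma condIndep_separation {Ω E : Type*} [MeasurableSpace E] {Y : Ω → E} {m₁ m₂ : MeasurableSpace Ω}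
    {mΩ : MeasurableSpace Ω} [StandardBorelSpace Ω] {P : Measure Ω} [IsProbabilityMeasure P]
    (hY : MeasurableSpace.comap Y inferInstance ≤ mΩ) (h1 : m₁ ≤ mΩ) (h2 : m₂ ≤ mΩ)
    (h : CondIndep (MeasurableSpace.comap Y inferInstance) m₁ m₂ hY P)
    {F G : Set Ω} (hF : MeasurableSet[m₁] F) (hG : MeasurableSet[m₂] G)
    (hFG : ∀ᵐ ω ∂P, ω ∈ G → ω ∉ F) :
    ∃ A : Set E, ∀ᵐ ω ∂P, (ω ∈ F → Y ω ∈ A) ∧ (ω ∈ G → Y ω ∉ A) := by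
  have h3 := (condIndep_iff _ _ _ hY h1 h2 P).1 h F G hF hG
  set m' : MeasurableSpace Ω := MeasurableSpace.comap Y inferInstance with hm'
  have hcm : Measurable[m'] (P⟦F | m'⟧) := stronglyMeasurable_condExp.measurable
  have hN : MeasurableSet[m'] {ω | 0 < (P⟦F | m'⟧) ω} := measurableSet_lt measurable_const hcm
  obtain ⟨A, -, hA⟩ := hN
  have hA' : ∀ ω, Y ω ∈ A ↔ 0 < (P⟦F | m'⟧) ω := fun ω => by
    change ω ∈ Y ⁻¹' A ↔ _
    rw [hA]; rfl
  have h0 : (P⟦F ∩ G | m'⟧) =ᵐ[P] 0 := by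
    have : ((F ∩ G).indicator fun _ => (1:ℝ)) =ᵐ[P] 0 := by
      filter_upwards [hFG] with ω hω
      rw [Set.indicator_of_notMem]
      · rfl
      · exact fun hh => hω hh.2 hh.1
    exact (condExp_congr_ae this).trans (by rw [condExp_zero])
  refine ⟨A, ?_⟩
  filter_upwards [h3, h0, ae_condExp_indicator_pos hY (h1 _ hF), ae_condExp_indicator_pos hY (h2 _ hG)]
    with ω e1 e2 e3 e4
  refine ⟨fun hω => (hA' ω).2 (e3 hω), fun hω hA1 => ?_⟩
  have p1 := (hA' ω).1 hA1
  have p2 := e4 hω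
  have := mul_pos p1 p2
  rw [e2] at e1
  simp only [Pi.mul_apply, Pi.zero_apply] at e1
  linarith

end Transfer

/-! ### An event of positive probability on which a face exists -/

section Good
variable {Ω : Type*} [MeasurableSpace Ω] {P : Measure Ω} [IsProbabilityMeasure P]
  {B : ℝ → Ω → ℝ}

lemma IsBrownianMotion.incr_scale (hB : IsBrownianMotion P B) {s t σ : ℝ} (hs : 0 ≤ s) (hσ : 0 ≤ σ)
    (h : t - s = σ ^ 2) {S : Set ℝ} (hS : MeasurableSet S) :
    P {ω | B t ω - B s ω ∈ S} = gaussianReal 0 1 {x | σ * x ∈ S} := by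
  have h1 := hB.incr_law s t hs (by nlinarith)
  have h2 := gaussianReal_map_const_mul (μ := 0) (v := 1) σ
  have e : Real.toNNReal (t - s) = NNReal.mk (σ^2) (sq_nonneg _) * 1 := by
    rw [mul_one, h]
    exact Real.toNNReal_of_nonneg (sq_nonneg _)
  rw [mul_zero, ← e, ← h1] at h2
  have h3 := congrArg (fun μ : Measure ℝ => μ S) h2
  rw [Measure.map_apply (by fun_prop) hS,
    Measure.map_apply (f := fun ω => B t ω - B s ω) ((hB.measurable _).sub (hB.measurable _)) hS] at h3
  exact h3.symm

lemma gauss_open_pos {S : Set ℝ} (hS : IsOpen S) (hne : S.Nonempty) : gaussianReal 0 1 S ≠ 0 := by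
  intro h
  exact (hS.measure_pos volume hne).ne' ((gaussianReal_absolutelyContinuous' 0 one_ne_zero) h)

lemma IsBrownianMotion.good (hB : IsBrownianMotion P B) :
    ∃ᶠ ω in ae P, B 2 ω < 0 ∧ (∀ C : ℝ, ∃ u, 0 < u ∧ C * u < B u ω) ∧
      (∀ C : ℝ, ∃ u, 0 ≤ u ∧ C < B u ω) := by
  have hm := hB.measurable
  let j : ℕ → ℝ := fun n => (n:ℝ) + 2
  have hj : ∀ n, 2 ≤ j n := fun n => by simp [j]
  let σ : ℕ → ℝ := fun n => 1 / j n
  have hσ : ∀ n, 0 < σ n := fun n => by have := hj n; positivity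
  have hσ2 : ∀ n, σ n ≤ 1 / 2 := fun n => by
    have := hj n
    exact one_div_le_one_div_of_le (by norm_num) this
  let U : ℕ → Set Ω := fun n => {ω | B (σ n ^ 2) ω - B 0 ω ∈ Set.Ioo (σ n) (2 * σ n)}
  let V : ℕ → Set Ω := fun n => {ω | B 2 ω - B (σ n ^ 2) ω ∈ Set.Iio (-1)}
  let W : ℕ → Set Ω := fun n => {ω | B (2 + j n ^ 2) ω - B 2 ω ∈ Set.Ioi (j n)}
  let c : ℝ≥0∞ := gaussianReal 0 1 (Set.Ioi 1) * (gaussianReal 0 1 (Set.Iio (-1)) *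
    gaussianReal 0 1 (Set.Ioo 1 2))
  have hc : c ≠ 0 := by
    refine mul_ne_zero (gauss_open_pos isOpen_Ioi ⟨2, by norm_num⟩)
      (mul_ne_zero (gauss_open_pos isOpen_Iio ⟨-2, by norm_num⟩)
      (gauss_open_pos isOpen_Ioo ⟨3/2, by norm_num⟩))
  have hσ4 : ∀ n, σ n ^ 2 ≤ 1 := fun n => by have := hσ n; have := hσ2 n; nlinarith
  have hA : ∀ n, c ≤ P (W n ∩ (V n ∩ U n)) := by
    intro n
    have hjn := hj n
    have hσn := hσ n
    have hU : MeasurableSet[natSigma B (σ n ^ 2)] (U n) := by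
      have : @Measurable _ _ (natSigma B (σ n ^ 2)) _ (fun ω => B (σ n ^ 2) ω - B 0 ω) :=
        (natSigma_measurable B (by positivity) le_rfl).sub (natSigma_measurable B le_rfl (by positivity))
      exact this measurableSet_Ioo
    have hU2 : MeasurableSet[natSigma B 2] (U n) := by
      have : @Measurable _ _ (natSigma B 2) _ (fun ω => B (σ n ^ 2) ω - B 0 ω) :=
        (natSigma_measurable B (by positivity) (by linarith [hσ4 n])).sub
          (natSigma_measurable B le_rfl (by positivity))
      exact this measurableSet_Ioo
    have hV2 : MeasurableSet[natSigma B 2] (V n) := by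
      have : @Measurable _ _ (natSigma B 2) _ (fun ω => B 2 ω - B (σ n ^ 2) ω) :=
        (natSigma_measurable B (by positivity) le_rfl).sub
          (natSigma_measurable B (by positivity) (by linarith [hσ4 n]))
      exact this measurableSet_Iio
    rw [(Indep_iff _ _ _).1 (hB.incr_indep 2 (2 + j n ^ 2) (by norm_num) (by nlinarith)) (W n) (V n ∩ U n)
      ⟨Set.Ioi (j n), measurableSet_Ioi, rfl⟩ (hV2.inter hU2),
      (Indep_iff _ _ _).1 (hB.incr_indep (σ n ^ 2) 2 (by positivity) (by linarith [hσ4 n])) (V n) (U n)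
      ⟨Set.Iio (-1), measurableSet_Iio, rfl⟩ hU]
    refine mul_le_mul' ?_ (mul_le_mul' ?_ ?_)
    · rw [hB.incr_scale (by norm_num) (by linarith : 0 ≤ j n) (by ring) measurableSet_Ioi]
      apply measure_mono
      intro x (hx : 1 < x)
      show j n < j n * x
      nlinarith
    · rw [hB.incr_scale (by positivity) (Real.sqrt_nonneg (2 - σ n ^ 2))
        (by rw [Real.sq_sqrt]; linarith [hσ4 n]) measurableSet_Iio]
      apply measure_mono
      intro x (hx : x < -1)
      show √(2 - σ n ^ 2) * x < -1
      have : 1 ≤ √(2 - σ n ^ 2) := Real.one_le_sqrt.2 (by linarith [hσ4 n])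
      nlinarith
    · rw [hB.incr_scale le_rfl hσn.le (by ring) measurableSet_Ioo]
      apply measure_mono
      rintro x ⟨h1, h2⟩
      show σ n * x ∈ Set.Ioo (σ n) (2 * σ n)
      constructor <;> nlinarith
  let T : ℕ → Set Ω := fun n => ⋃ i ≥ n, W i ∩ (V i ∩ U i)
  have hTm : ∀ n, MeasurableSet (T n) := by
    intro n
    refine MeasurableSet.iUnion fun i => MeasurableSet.iUnion fun _ => ?_
    exact ((((hm _).sub (hm _)) measurableSet_Ioi).inter ((((hm _).sub (hm _)) measurableSet_Iio).inter
      (((hm _).sub (hm _)) measurableSet_Ioo)))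
  have hTa : Antitone T := by
    intro a b hab
    exact Set.biUnion_subset_biUnion_left fun i (hi : b ≤ i) => hab.trans hi
  have hT : c ≤ P (⋂ n, T n) := by
    rw [hTa.measure_iInter (fun n => (hTm n).nullMeasurableSet) ⟨0, measure_ne_top _ _⟩]
    refine le_iInf fun n => (hA n).trans (measure_mono ?_)
    exact Set.subset_biUnion_of_mem (u := fun i => W i ∩ (V i ∩ U i)) (show n ≥ n from le_rfl)
  intro hbad
  have h0 : P (⋂ n, T n) = 0 := by
    have : ∀ᵐ ω ∂P, ω ∉ ⋂ n, T n := by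
      filter_upwards [hbad, hB.init] with ω h1 h2 h3
      apply h1
      have h4 : ∀ n, ∃ i ≥ n, ω ∈ W i ∩ (V i ∩ U i) := by
        intro n
        have := Set.mem_iInter.1 h3 n
        simp only [T, Set.mem_iUnion, exists_prop] at this
        exact this
      have hi : ∀ i, ω ∈ W i ∩ (V i ∩ U i) → j i < B (2 + j i ^ 2) ω - B 2 ω ∧
          B 2 ω - B (σ i ^ 2) ω < -1 ∧ σ i < B (σ i ^ 2) ω ∧ B (σ i ^ 2) ω < 2 * σ i := by
        rintro i ⟨a1, a2, a3, a4⟩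
        rw [h2, sub_zero] at a3 a4
        exact ⟨a1, a2, a3, a4⟩
      refine ⟨?_, fun C => ?_, fun C => ?_⟩
      · obtain ⟨i, -, hi'⟩ := h4 0
        obtain ⟨b1, b2, b3, b4⟩ := hi i hi'
        linarith [hσ2 i]
      · obtain ⟨n, hn⟩ := exists_nat_gt C
        obtain ⟨i, hin, hi'⟩ := h4 n
        obtain ⟨b1, b2, b3, b4⟩ := hi i hi'
        refine ⟨σ i ^ 2, by have := hσ i; positivity, lt_of_le_of_lt ?_ b3⟩
        have : C ≤ j i := by
          have : (n:ℝ) ≤ i := by exact_mod_cast hin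
          simp only [j]; linarith
        have h5 : σ i * j i = 1 := by
          have := hj i
          simp only [σ]; field_simp
        have := hσ i
        nlinarith [mul_le_mul_of_nonneg_left ‹C ≤ j i› (sq_nonneg (σ i))]
      · obtain ⟨n, hn⟩ := exists_nat_gt (C - B 2 ω)
        obtain ⟨i, hin, hi'⟩ := h4 n
        obtain ⟨b1, b2, b3, b4⟩ := hi i hi'
        refine ⟨2 + j i ^ 2, by positivity, ?_⟩
        have : (n:ℝ) ≤ i := by exact_mod_cast hin
        have : (n:ℝ) ≤ j i := by simp only [j]; linarith
        linarith
    simpa only [not_not] using measure_eq_zero_iff_ae_notMem.2 this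
  rw [h0] at hT
  exact hc (le_antisymm hT zero_le)

end Good

/-! ### Conclusion -/

/-- the family of shifts used in the proof -/
def shiftFn (t a e b δ u : ℝ) : ℝ := a * ramp 0 δ u + e * tent 2 δ u + b * tent t δ u

lemma Face.room {f : ℝ → ℝ} {m k g d : ℝ} (h : Face f m k g d) (hcont : ContinuousOn f (Set.Ici 0))
    {x e : ℝ} (hg : g < x) (hd : x < d) (he : e < m + k * x - f x) :
    ∃ δ > 0, ∀ u, |u - x| < δ → e < m + k * u - f u ∧ 0 < m + k * u - f u := by
  have hx : 0 < x := h.g_pos.trans hg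
  have hc : ContinuousAt (fun u => m + k * u - f u) x := by
    have := hcont.continuousAt (Ici_mem_nhds hx)
    fun_prop
  have h0 : 0 < m + k * x - f x := by linarith [h.lt x hg hd]
  have := (hc.eventually (lt_mem_nhds he)).and (hc.eventually (lt_mem_nhds h0))
  obtain ⟨δ, hδ, hh⟩ := Metric.eventually_nhds_iff.1 this
  exact ⟨δ, hδ, fun u hu => hh (by rwa [Real.dist_eq])⟩

lemma tent_mul_lt {x δ u e y : ℝ} (hδ : 0 < δ) (he : e < y) (hy : 0 < y) : e * tent x δ u < y := by
  have h1 := tent_nonneg hδ (x := x) u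
  have h2 := tent_le_one x δ u
  rcases le_total e 0 with h | h
  · nlinarith
  · nlinarith

lemma shift_face {f : ℝ → ℝ} {m k g d : ℝ} (h : Face f m k g d)
    (hcont : ContinuousOn f (Set.Ici 0)) {t : ℝ} (hg : g < 2) (ht : 2 < t) (htd : t < d) {e b : ℝ}
    (he : e < m + k * 2 - f 2) (hb : b < m + k * t - f t) :
    ∃ n : ℕ, ∀ a : ℝ, 0 ≤ a → ∀ f' : ℝ → ℝ,
      (∀ u, 0 ≤ u → f' u = f u + shiftFn t a e b (1 / ((n:ℝ) + 1)) u) →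
      Face f' (m + a) k g d ∧ f' 2 = f 2 + a + e ∧ f' t = f t + a + b := by
  have hg0 := h.g_pos
  obtain ⟨δ1, hδ1, h1⟩ := h.room hcont hg (ht.trans htd) he
  obtain ⟨δ2, hδ2, h2⟩ := h.room hcont (hg.trans ht) htd hb
  have hpos : 0 < min (min δ1 δ2) (min (min g (2 - g)) (min ((t - 2) / 2) (d - t))) := by
    refine lt_min (lt_min hδ1 hδ2) (lt_min (lt_min hg0 (by linarith)) (lt_min ?_ ?_)) <;> linarith
  obtain ⟨n, hn⟩ := exists_nat_one_div_lt hpos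
  refine ⟨n, fun a ha f' hf' => ?_⟩
  have hδ : 0 < 1 / ((n:ℝ) + 1) := by positivity
  set δ := 1 / ((n:ℝ) + 1) with hδdef
  simp only [lt_min_iff] at hn
  obtain ⟨⟨n1, n2⟩, ⟨n3, n4⟩, n5, n6⟩ := hn
  refine ⟨h.add hf' (by linarith) ?_ ?_ ?_ ?_, ?_, ?_⟩
  · unfold shiftFn
    rw [ramp_right hδ n3.le, tent_out hδ (Or.inl (by linarith)), tent_out hδ (Or.inl (by linarith))]
    ring
  · unfold shiftFn
    rw [ramp_right hδ (by linarith), tent_out hδ (Or.inr (by linarith)),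
      tent_out hδ (Or.inr (by linarith))]
    ring
  · intro u hu hu2
    unfold shiftFn
    have h3 : tent 2 δ u = 0 := tent_out hδ (hu2.imp (fun _ => by linarith) (fun _ => by linarith))
    have h4 : tent t δ u = 0 := tent_out hδ (hu2.imp (fun _ => by linarith) (fun _ => by linarith))
    rw [h3, h4]
    have := ramp_le_one 0 δ u
    nlinarith
  · intro u hu1 hu2
    unfold shiftFn
    rw [ramp_right hδ (by linarith)]
    by_cases hc1 : |u - 2| < δ
    · rw [abs_lt] at hc1
      rw [tent_out (x := t) hδ (Or.inl (by linarith))]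
      obtain ⟨r1, r2⟩ := h1 u (abs_lt.2 ⟨by linarith, by linarith⟩)
      have := tent_mul_lt (x := 2) (u := u) hδ r1 r2
      linarith
    · have : tent 2 δ u = 0 := by
        apply tent_out hδ
        by_contra hh
        push Not at hh
        exact hc1 (abs_lt.2 ⟨by linarith, by linarith⟩)
      rw [this]
      by_cases hc2 : |u - t| < δ
      · obtain ⟨r1, r2⟩ := h2 u (by linarith)
        have := tent_mul_lt (x := t) (u := u) hδ r1 r2
        linarith
      · have : tent t δ u = 0 := by
          apply tent_out hδ
          by_contra hh
          push Not at hh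
          exact hc2 (abs_lt.2 ⟨by linarith, by linarith⟩)
        rw [this]
        linarith [h.lt u hu1 hu2]
  · rw [hf' 2 (by norm_num), shiftFn, ramp_right hδ (by linarith), tent_center hδ,
      tent_out hδ (Or.inl (by linarith))]
    ring
  · rw [hf' t (by linarith), shiftFn, ramp_right hδ (by linarith), tent_center hδ,
      tent_out (x := 2) hδ (Or.inr (by linarith))]
    ring

section Main
variable {Ω : Type*} [MeasurableSpace Ω] [StandardBorelSpace Ω] {P : Measure Ω}
  [IsProbabilityMeasure P] {B : ℝ → Ω → ℝ}

lemma IsBrownianMotion.frequently_face (hB : IsBrownianMotion P B) :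
    ∃ t : ℝ, 2 < t ∧ ∃ᶠ ω in ae P, ∃ m k g d, Face (fun u => B u ω) m k g d ∧ g < 2 ∧ t < d ∧
      k * (t - 2) < m + k * 2 - B 2 ω := by
  by_contra hcon
  push Not at hcon
  have h1 : ∀ n : ℕ, ∀ᵐ ω ∂P, ¬ ∃ m k g d, Face (fun u => B u ω) m k g d ∧ g < 2 ∧
      2 + 1 / ((n:ℝ) + 1) < d ∧ k * (2 + 1 / ((n:ℝ) + 1) - 2) < m + k * 2 - B 2 ω := fun n => by
    have := hcon (2 + 1 / ((n:ℝ) + 1)) (by have : 0 < 1 / ((n:ℝ) + 1) := by positivity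
                                           linarith)
    filter_upwards [this] with ω hω
    rintro ⟨m, k, g, d, a1, a2, a3, a4⟩
    exact absurd a4 (not_lt.2 (hω m k g d a1 a2 a3))
  apply hB.good
  filter_upwards [ae_all_iff.2 h1, hB.cont, hB.init, hB.sublin] with ω h2 hc h0 hs ⟨g1, g2, g3⟩
  obtain ⟨m, k, g, d, hF, hg, hd⟩ := exists_face hc h0 hs (by norm_num : (0:ℝ) < 2) g1 g2 g3
  have hZ : 0 < m + k * 2 - B 2 ω := by have := hF.lt 2 hg hd; linarith
  have hpos : 0 < min (d - 2) ((m + k * 2 - B 2 ω) / (|k| + 1)) :=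
    lt_min (by linarith) (by positivity)
  obtain ⟨n, hn⟩ := exists_nat_one_div_lt hpos
  apply h2 n
  refine ⟨m, k, g, d, hF, hg, ?_, ?_⟩
  · have := hn.trans_le (min_le_left _ _); linarith
  · have h3 := hn.trans_le (min_le_right _ _)
    rw [lt_div_iff₀ (by positivity)] at h3
    have h4 : 0 < 1 / ((n:ℝ) + 1) := by positivity
    have := le_abs_self k
    nlinarith

lemma IsBrownianMotion.transfer_all (hB : IsBrownianMotion P B) {p : Ω → Prop}
    (hp : ∀ᵐ ω ∂P, p ω) {t : ℝ} (ht : 2 < t) :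
    ∀ᵐ ω ∂P, ∀ (a e b : ℚ) (n : ℕ), ∃ ω', p ω' ∧
      ∀ u, 0 ≤ u → B u ω' = B u ω + shiftFn t a e b (1 / ((n:ℝ) + 1)) u := by
  simp only [ae_all_iff]
  intro a e b n
  have hδ : 0 < 1 / ((n:ℝ) + 1) := by positivity
  have hδ1 : 1 / ((n:ℝ) + 1) ≤ 1 := by
    rw [div_le_one (by positivity)]; linarith [(Nat.cast_nonneg n : (0:ℝ) ≤ n)]
  refine hB.transfer hp (φ := shiftFn t a e b (1 / ((n:ℝ) + 1))) ?_ ?_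
  · exact hB.adm_add (hB.adm_add (hB.adm_ramp le_rfl hδ _) (hB.adm_tent hδ (by linarith) _))
      (hB.adm_tent hδ (by linarith) _)
  · have h1 := ramp_cont (p := 0) (q := 1 / ((n:ℝ) + 1))
    have h2 := tent_cont (x := 2) (δ := 1 / ((n:ℝ) + 1))
    have h3 := tent_cont (x := t) (δ := 1 / ((n:ℝ) + 1))
    unfold shiftFn
    fun_prop

lemma IsMarkov.natSigma_le {E : Type*} [MeasurableSpace E] {Y : ℝ → Ω → E} (h : IsMarkov P Y)
    (s : ℝ) : natSigma Y s ≤ ‹MeasurableSpace Ω› :=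
  iSup_le fun u => (h u u u.2.1 le_rfl).1

lemma IsMarkov.sep {E : Type*} [MeasurableSpace E] {Y : ℝ → Ω → E} (h : IsMarkov P Y) {s t : ℝ}
    (hs : 0 ≤ s) (hst : s ≤ t) {F G : Set Ω}
    (hF : MeasurableSet[MeasurableSpace.comap (Y t) inferInstance] F)
    (hG : MeasurableSet[natSigma Y s] G) (hFG : ∀ᵐ ω ∂P, ω ∈ G → ω ∉ F) :
    ∃ A : Set E, ∀ᵐ ω ∂P, (ω ∈ F → Y s ω ∈ A) ∧ (ω ∈ G → Y s ω ∉ A) := by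
  obtain ⟨h1, h2⟩ := h s t hs hst
  exact condIndep_separation h1 (h t t (hs.trans hst) le_rfl).1 (h.natSigma_le s) h2 hF hG hFG

lemma Face.kslope {ω : Ω} {m k g d : ℝ} (h : Face (fun u => B u ω) m k g d) {u : ℝ} (h1 : g < u)
    (h2 : u < d) : Kslope B u ω = k := h.slope h1.le h2
lemma Face.dproc {ω : Ω} {m k g d : ℝ} (h : Face (fun u => B u ω) m k g d) {u : ℝ} (h1 : g < u)
    (h2 : u < d) : Dproc B u ω = d := h.fv h1 h2.le
lemma Face.kproc {ω : Ω} {m k g d : ℝ} (h : Face (fun u => B u ω) m k g d) {u : ℝ} (h1 : g < u)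
    (h2 : u < d) : Kproc B u ω = m + k * u := h.cm_eq h1.le h2.le

theorem B_not_markov (hB : IsBrownianMotion P B) :
    ¬ IsMarkov P (fun t ω => ((B t ω, Kslope B t ω, Dproc B t ω - t) : ℝ × ℝ × ℝ)) := by
  intro hM
  set Y : ℝ → Ω → ℝ × ℝ × ℝ := fun t ω => (B t ω, Kslope B t ω, Dproc B t ω - t) with hY
  obtain ⟨t, ht, hfreq⟩ := hB.frequently_face
  let F : ℚ → Set Ω := fun q => {ω | (q:ℝ) < B t ω}
  let G : ℚ → Set Ω := fun q => {ω | ∀ u : ℚ, 0 ≤ (u:ℝ) → (u:ℝ) ≤ 2 →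
    B u ω + Kslope B 2 ω * (t - u) ≤ q}
  have hF : ∀ q, MeasurableSet[MeasurableSpace.comap (Y t) inferInstance] (F q) := fun q =>
    ⟨{z | (q:ℝ) < z.1}, measurableSet_lt measurable_const measurable_fst, rfl⟩
  have hG : ∀ q, MeasurableSet[natSigma Y 2] (G q) := by
    intro q
    have e : G q = ⋂ u : ℚ, ⋂ (_ : 0 ≤ (u:ℝ)), ⋂ (_ : (u:ℝ) ≤ 2),
        {ω | (Y u ω).1 + (Y 2 ω).2.1 * (t - u) ≤ q} := by
      ext ω; simp [G, Y]
    rw [e]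
    refine MeasurableSet.iInter fun u => MeasurableSet.iInter fun h0 => MeasurableSet.iInter fun h2 => ?_
    have m1 := natSigma_measurable Y h0 h2
    have m2 := natSigma_measurable Y (by norm_num : (0:ℝ) ≤ 2) le_rfl
    exact measurableSet_le ((measurable_fst.comp m1).add
      (((measurable_fst.comp measurable_snd).comp m2).mul_const _)) measurable_const
  have hsep : ∀ q, ∃ A : Set (ℝ × ℝ × ℝ), ∀ᵐ ω ∂P, (ω ∈ F q → Y 2 ω ∈ A) ∧ (ω ∈ G q → Y 2 ω ∉ A) := by
    intro q
    refine hM.sep (by norm_num) ht.le (hF q) (hG q) ?_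
    filter_upwards [hB.cont, hB.sublin] with ω hc hs hω
    have := stat_B hc hs (s := 2) (by norm_num) (t := t) (by push_cast; exact ht.le) (q := q)
      (fun u h0 h2 => by
        have h3 := hω u h0 (by simpa using h2)
        push_cast
        exact h3)
    exact not_lt.2 this
  choose A hA using hsep
  have hA' := ae_all_iff.2 hA
  apply hfreq
  filter_upwards [hA', hB.transfer_all hA' ht, hB.cont] with ω h1 h2 hc
  rintro ⟨m, k, g, d, hf, hg, hd, -⟩
  have h2d : 2 < d := ht.trans hd
  obtain ⟨q, hq⟩ := exists_rat_gt (m + k * t)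
  have hωG : ω ∈ G q := by
    intro u h0 _
    rw [hf.kslope hg h2d]
    have := hf.le u h0
    try simp only at this
    linarith
  have hn := (h1 q).2 hωG
  obtain ⟨a, ha⟩ := exists_rat_gt (max 0 (q - B t ω))
  have ha0 : (0:ℝ) < a := (le_max_left _ _).trans_lt ha
  have ha1 : (q:ℝ) - B t ω < a := (le_max_right _ _).trans_lt ha
  have l2 := hf.lt 2 hg h2d
  have lt' := hf.lt t (hg.trans ht) hd
  try simp only at l2 lt'
  obtain ⟨n, hn'⟩ := shift_face hf hc hg ht hd (e := ((-a : ℚ) : ℝ)) (b := ((0:ℚ):ℝ))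
    (by push_cast; linarith) (by push_cast; linarith)
  obtain ⟨ω', p1, p2⟩ := h2 a (-a) 0 n
  obtain ⟨f1, f2, f3⟩ := hn' a ha0.le (fun u => B u ω') p2
  have hωF : ω' ∈ F q := by
    show (q:ℝ) < B t ω'
    try simp only at f3
    rw [f3]; push_cast; linarith
  have hin := (p1 q).1 hωF
  have e : Y 2 ω' = Y 2 ω := by
    simp only [hY, hf.kslope hg h2d, hf.dproc hg h2d, f1.kslope hg h2d, f1.dproc hg h2d]
    try simp only at f2
    rw [f2]; push_cast; simp
  rw [e] at hin
  exact hn hin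

theorem X_not_markov (hB : IsBrownianMotion P B) :
    ¬ IsMarkov P (fun t ω => ((Xproc B t ω, Kslope B t ω, Dproc B t ω - t) : ℝ × ℝ × ℝ)) := by
  intro hM
  set Y : ℝ → Ω → ℝ × ℝ × ℝ := fun t ω => (Xproc B t ω, Kslope B t ω, Dproc B t ω - t) with hY
  obtain ⟨t, ht, hfreq⟩ := hB.frequently_face
  let F : ℚ → Set Ω := fun q => {ω | Xproc B t ω < q}
  let G : ℚ → Set Ω := fun q => {ω | ∀ u : ℚ, 0 < (u:ℝ) → (u:ℝ) ≤ 2 →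
    (q:ℝ) ≤ Xproc B u ω + Kslope B u ω * (2 - u)}
  have hF : ∀ q, MeasurableSet[MeasurableSpace.comap (Y t) inferInstance] (F q) := fun q =>
    ⟨{z | z.1 < (q:ℝ)}, measurableSet_lt measurable_fst measurable_const, rfl⟩
  have hG : ∀ q, MeasurableSet[natSigma Y 2] (G q) := by
    intro q
    have e : G q = ⋂ u : ℚ, ⋂ (_ : 0 < (u:ℝ)), ⋂ (_ : (u:ℝ) ≤ 2),
        {ω | (q:ℝ) ≤ (Y u ω).1 + (Y u ω).2.1 * (2 - u)} := by
      ext ω; simp [G, Y]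
    rw [e]
    refine MeasurableSet.iInter fun u => MeasurableSet.iInter fun h0 => MeasurableSet.iInter fun h2 => ?_
    have m1 := natSigma_measurable Y h0.le h2
    exact measurableSet_le measurable_const ((measurable_fst.comp m1).add
      (((measurable_fst.comp measurable_snd).comp m1).mul_const _))
  have hsep : ∀ q, ∃ A : Set (ℝ × ℝ × ℝ), ∀ᵐ ω ∂P, (ω ∈ F q → Y 2 ω ∈ A) ∧ (ω ∈ G q → Y 2 ω ∉ A) := by
    intro q
    refine hM.sep (by norm_num) ht.le (hF q) (hG q) ?_
    filter_upwards [hB.cont, hB.sublin] with ω hc hs hω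
    have := stat_X hc hs (s := 2) (by norm_num) (t := t) (by push_cast; exact ht.le) (q := q)
      (fun u h0 h2 => by
        have h3 := hω u h0 (by simpa using h2)
        push_cast
        exact h3)
    exact not_lt.2 this
  choose A hA using hsep
  have hA' := ae_all_iff.2 hA
  apply hfreq
  filter_upwards [hB.transfer_all hA' ht, hB.cont] with ω h2 hc
  rintro ⟨m, k, g, d, hf, hg, hd, hZ⟩
  have h2d : 2 < d := ht.trans hd
  have hgt : g < t := hg.trans ht
  have l2 := hf.lt 2 hg h2d
  have lt' := hf.lt t hgt hd
  try simp only at l2 lt'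
  obtain ⟨a, ha1, ha2⟩ := exists_rat_btwn (show max 0 (k * (t - 2)) < m + k * 2 - B 2 ω from
    max_lt (by linarith) hZ)
  have ha0 : (0:ℝ) < a := (le_max_left _ _).trans_lt ha1
  have ha3 : k * (t - 2) < a := (le_max_right _ _).trans_lt ha1
  obtain ⟨q, hq1, hq2⟩ := exists_rat_btwn (show m + k * t < m + k * 2 + a by linarith)
  obtain ⟨b, hb1, hb2⟩ := exists_rat_btwn (show m + k * t - B t ω - (q - (m + k * t)) <
    m + k * t - B t ω by linarith)
  -- first perturbation
  obtain ⟨n, hn'⟩ := shift_face hf hc hg ht hd (e := (a : ℝ)) (b := ((0:ℚ):ℝ))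
    ha2 (by push_cast; linarith)
  obtain ⟨ω', p1, p2⟩ := h2 a a 0 n
  obtain ⟨f1, f2, f3⟩ := hn' a ha0.le (fun u => B u ω') p2
  have hωG : ω' ∈ G q := by
    intro u h0 hu
    have k2 := f1.kproc hg h2d
    have s1 := cm_supergradient f1.hasMaj h0 (by norm_num : (0:ℝ) ≤ 2)
    have s2 := le_cm f1.hasMaj h0.le
    have s1' : Kproc B 2 ω' ≤ Kproc B u ω' + Kslope B u ω' * (2 - u) := s1
    have s2' : B u ω' ≤ Kproc B u ω' := s2
    simp only [Xproc]
    linarith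
  have hn := (p1 q).2 hωG
  have e1 : Y 2 ω' = Y 2 ω := by
    simp only [hY, Xproc, hf.kslope hg h2d, hf.dproc hg h2d, f1.kslope hg h2d, f1.dproc hg h2d,
      hf.kproc hg h2d, f1.kproc hg h2d]
    try simp only at f2
    rw [f2]; congr 1; ring
  -- second perturbation
  obtain ⟨n2, hn2⟩ := shift_face hf hc hg ht hd (e := ((0:ℚ) : ℝ)) (b := (b:ℝ))
    (by push_cast; linarith) hb2
  obtain ⟨ω'', r1, r2⟩ := h2 0 0 b n2
  obtain ⟨f4, f5, f6⟩ := hn2 ((0:ℚ):ℝ) (by simp) (fun u => B u ω'') r2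
  simp only [Rat.cast_zero, add_zero] at f4 f5 f6
  have hωF : ω'' ∈ F q := by
    show Xproc B t ω'' < q
    simp only [Xproc, f4.kproc hgt hd, f6]
    linarith
  have hin := (r1 q).1 hωF
  have e2 : Y 2 ω'' = Y 2 ω := by
    simp only [hY, Xproc, hf.kslope hg h2d, hf.dproc hg h2d, f4.kslope hg h2d, f4.dproc hg h2d,
      hf.kproc hg h2d, f4.kproc hg h2d, f5]
  rw [e2] at hin
  rw [e1] at hn
  exact hn hin

end Main


/-- Neither `(X(t), K'(t), D(t) - t)` nor `(B(t), K'(t), D(t) - t)` is a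
Markov process, where `X = 2K - B`. -/
theorem X_and_B_with_slope_D_not_markov {Ω : Type*} [MeasurableSpace Ω] [StandardBorelSpace Ω]
    (P : Measure Ω) [IsProbabilityMeasure P] (B : ℝ → Ω → ℝ)
    (hB : IsBrownianMotion P B) :
    ¬ IsMarkov P (fun t ω => ((Xproc B t ω, Kslope B t ω, Dproc B t ω - t) : ℝ × ℝ × ℝ)) ∧
    ¬ IsMarkov P (fun t ω => ((B t ω, Kslope B t ω, Dproc B t ω - t) : ℝ × ℝ × ℝ)) := by
  exact ⟨X_not_markov hB, B_not_markov hB⟩
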